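/- Let G, H₁ and H₂ be pairwise disjoint finite simple connected graphs, where G has n ≥ 3 vertices and m edges, H₁ has n₁ vertices and m₁ edges, H₂ has n₂ vertices and m₂ edges, and G is not isomorphic to the star Sₙ. Then Lξᶜ(G^S △ (H₁^V ∨ H₂^S)) = 3(n + n₂ − 1)(n + n₂) + 3(m + n₁ − 1)(m + n₁) − 6(m₁ + m₂). -/

import Mathlib

/-!
Write `X` for the subdivision vertex edge join. Its vertices fall into four classes: `V(G)`,
`E(G)`, `V(H₁)` and `V(H₂)`.

Two vertices of `X` are at distance 2 exactly when they are distinct, nonadjacent and have a common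
neighbour (`dist_eq_two_iff_exists`). Two distinct vertices of `V(G)` share the neighbours in `H₁`,
and two distinct edges share the neighbours in `H₂`. A vertex of `G` and a vertex of `H₂` share the
edges at that vertex, and an edge and a vertex of `H₁` share its endpoints. Two nonadjacent vertices
of `H₁` share all of `V(G)`, and two of `H₂` share all of `E(G)`. There are no other pairs at
distance 2. So the second degrees are
* `n + n₂ - 1` on `V(G)` and `m + n₁ - 1` on `E(G)` (`deg2_V`, `deg2_E`),
* `m + n₁ - 1 - d₁(x|H₁)` on `V(H₁)` and `n + n₂ - 1 - d₁(y|H₂)` on `V(H₂)` (`deg2_1`, `deg2_2`).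

Every eccentricity is 3 (`ecc_eq_three`): any two vertices are joined by a walk of length at most 3,
a vertex of `H₁` is at distance 3 from each vertex of `H₂`, and a vertex of `G` is at distance 3
from each edge not containing it. Each edge misses some vertex because `n ≥ 3`. Each vertex misses
some edge because a connected graph with a vertex lying on all edges is a star
(`nonempty_iso_star`).

Summing `3 * d₂` and applying the handshake formula to `H₁` and `H₂` gives the result.
-/

/-!
Definitions for the leap eccentric connectivity index of graph operations with
subdivided edges (Song–Tang).
-/

open SimpleGraph Finset
open scoped Classical

noncomputable section

instance edgeSetFintypeOfFintype {V : Type*} [Fintype V] (G : SimpleGraph V) :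
    Fintype G.edgeSet :=
  Set.Finite.fintype (Set.toFinite _)

/-- Eccentricity `e(v|X)` of a vertex: the maximum distance from `v` to a vertex of `X`. -/
def ecc {V : Type*} [Fintype V] (X : SimpleGraph V) (v : V) : ℕ :=
  Finset.univ.sup (fun u => X.dist v u)

/-- `d₁(v|X)`: the degree of `v`. -/
def deg1 {V : Type*} [Fintype V] (X : SimpleGraph V) (v : V) : ℕ :=
  (Finset.univ.filter (fun u => X.Adj v u)).card

/-- `d₂(v|X)`: the second degree of `v`, the number of vertices at distance exactly 2. -/
def deg2 {V : Type*} [Fintype V] (X : SimpleGraph V) (v : V) : ℕ :=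
  (Finset.univ.filter (fun u => X.dist v u = 2)).card

/-- The leap eccentric connectivity index `Lξᶜ(X) = Σ_v d₂(v|X)·e(v|X)`. -/
def leapECI {V : Type*} [Fintype V] (X : SimpleGraph V) : ℕ :=
  ∑ v, deg2 X v * ecc X v

/-- The eccentric connectivity index `ξᶜ(X) = Σ_v d₁(v|X)·e(v|X)`. -/
def eci {V : Type*} [Fintype V] (X : SimpleGraph V) : ℕ :=
  ∑ v, deg1 X v * ecc X v

/-- The first Zagreb index `M₁(X) = Σ_v d₁(v|X)²`. -/
def zagrebM1 {V : Type*} [Fintype V] (X : SimpleGraph V) : ℕ :=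
  ∑ v, (deg1 X v) ^ 2

/-- The total eccentricity `θ(X) = Σ_v e(v|X)`. -/
def totalEcc {V : Type*} [Fintype V] (X : SimpleGraph V) : ℕ :=
  ∑ v, ecc X v

/-- The number of edges `|E(X)|`. -/
def numEdges {V : Type*} (X : SimpleGraph V) : ℕ := X.edgeSet.ncard

/-- The line graph `L(G)`, with vertex set `E(G)`: two edges of `G` are adjacent in
`L(G)` iff they are distinct and share an endpoint. -/
def lineG {V : Type*} (G : SimpleGraph V) : SimpleGraph G.edgeSet :=
  SimpleGraph.fromRel (fun e f => ∃ v, v ∈ (e : Sym2 V) ∧ v ∈ (f : Sym2 V))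

/-- The subdivision graph `S(G)`, with vertex set `V(G) ⊕ E(G)`:
`v ∈ V(G)` is adjacent to `e ∈ E(G)` iff `v` is an endpoint of `e`; no other edges. -/
def subdivG {V : Type*} (G : SimpleGraph V) : SimpleGraph (V ⊕ G.edgeSet) :=
  SimpleGraph.fromRel (fun a b => match a, b with
    | Sum.inl v, Sum.inr e => v ∈ (e : Sym2 V)
    | _, _ => False)

/-- The graph `Q(G)`, with vertex set `V(G) ⊕ E(G)`: `v ∈ V(G)` is adjacent to
`e ∈ E(G)` iff `v` is an endpoint of `e`, and distinct `e, e' ∈ E(G)` are adjacent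
iff the corresponding edges share an endpoint in `G`. -/
def qGraph {V : Type*} (G : SimpleGraph V) : SimpleGraph (V ⊕ G.edgeSet) :=
  SimpleGraph.fromRel (fun a b => match a, b with
    | Sum.inl v, Sum.inr e => v ∈ (e : Sym2 V)
    | Sum.inr e, Sum.inr f => ∃ v, v ∈ (e : Sym2 V) ∧ v ∈ (f : Sym2 V)
    | _, _ => False)

/-- The graph `R(G)`, with vertex set `V(G) ⊕ E(G)`: `v, v' ∈ V(G)` are adjacent iff
they are adjacent in `G`, and `v ∈ V(G)` is adjacent to `e ∈ E(G)` iff `v` is an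
endpoint of `e`. -/
def rGraph {V : Type*} (G : SimpleGraph V) : SimpleGraph (V ⊕ G.edgeSet) :=
  SimpleGraph.fromRel (fun a b => match a, b with
    | Sum.inl v, Sum.inl w => G.Adj v w
    | Sum.inl v, Sum.inr e => v ∈ (e : Sym2 V)
    | _, _ => False)

/-- The total graph `T(G)`, with vertex set `V(G) ⊕ E(G)`: adjacency holds iff the
corresponding elements of `G` are adjacent or incident. -/
def tGraph {V : Type*} (G : SimpleGraph V) : SimpleGraph (V ⊕ G.edgeSet) :=
  SimpleGraph.fromRel (fun a b => match a, b with
    | Sum.inl v, Sum.inl w => G.Adj v w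
    | Sum.inl v, Sum.inr e => v ∈ (e : Sym2 V)
    | Sum.inr e, Sum.inr f => ∃ v, v ∈ (e : Sym2 V) ∧ v ∈ (f : Sym2 V)
    | _, _ => False)

/-- `G` is `F`-free: no induced subgraph of `G` is isomorphic to `F`. -/
def fFree {W V : Type*} (F : SimpleGraph W) (G : SimpleGraph V) : Prop :=
  ∀ s : Set V, IsEmpty (F ≃g G.induce s)

/-- The subdivision vertex join `G ∨̇ H`: the disjoint union of `S(G)` and `H`,
joining every original vertex of `G` to every vertex of `H`. -/
def svJoin {V W : Type*} (G : SimpleGraph V) (H : SimpleGraph W) :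
    SimpleGraph ((V ⊕ G.edgeSet) ⊕ W) :=
  SimpleGraph.fromRel (fun a b => match a, b with
    | Sum.inl x, Sum.inl y => (subdivG G).Adj x y
    | Sum.inl (Sum.inl _), Sum.inr _ => True
    | Sum.inr w, Sum.inr w' => H.Adj w w'
    | _, _ => False)

/-- The subdivision edge join `G ⊻ H`: the disjoint union of `S(G)` and `H`,
joining every subdivision vertex to every vertex of `H`. -/
def seJoin {V W : Type*} (G : SimpleGraph V) (H : SimpleGraph W) :
    SimpleGraph ((V ⊕ G.edgeSet) ⊕ W) :=
  SimpleGraph.fromRel (fun a b => match a, b with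
    | Sum.inl x, Sum.inl y => (subdivG G).Adj x y
    | Sum.inl (Sum.inr _), Sum.inr _ => True
    | Sum.inr w, Sum.inr w' => H.Adj w w'
    | _, _ => False)

/-- The subdivision vertex edge join `G^S △ (H₁^V ∨ H₂^S)`: the disjoint union of
`S(G)`, `H₁` and `H₂`, joining every original vertex of `G` to every vertex of `H₁`
and every subdivision vertex to every vertex of `H₂`. -/
def sveJoin {V W₁ W₂ : Type*} (G : SimpleGraph V) (H₁ : SimpleGraph W₁)
    (H₂ : SimpleGraph W₂) : SimpleGraph ((V ⊕ G.edgeSet) ⊕ (W₁ ⊕ W₂)) :=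
  SimpleGraph.fromRel (fun a b => match a, b with
    | Sum.inl x, Sum.inl y => (subdivG G).Adj x y
    | Sum.inl (Sum.inl _), Sum.inr (Sum.inl _) => True
    | Sum.inl (Sum.inr _), Sum.inr (Sum.inr _) => True
    | Sum.inr (Sum.inl w), Sum.inr (Sum.inl w') => H₁.Adj w w'
    | Sum.inr (Sum.inr w), Sum.inr (Sum.inr w') => H₂.Adj w w'
    | _, _ => False)

/-- The double corona of a base graph `B` on `A ⊕ E'` with the graphs `H₁, H₂`:
one copy of `H₁` for each `A`-vertex, joined to it, and one copy of `H₂` for each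
`E'`-vertex, joined to it. -/
def doubleCorona {A E' W₁ W₂ : Type*} (B : SimpleGraph (A ⊕ E')) (H₁ : SimpleGraph W₁)
    (H₂ : SimpleGraph W₂) : SimpleGraph ((A ⊕ E') ⊕ (A × W₁ ⊕ E' × W₂)) :=
  SimpleGraph.fromRel (fun a b => match a, b with
    | Sum.inl x, Sum.inl y => B.Adj x y
    | Sum.inl (Sum.inl v), Sum.inr (Sum.inl p) => v = p.1
    | Sum.inl (Sum.inr e), Sum.inr (Sum.inr p) => e = p.1
    | Sum.inr (Sum.inl p), Sum.inr (Sum.inl q) => p.1 = q.1 ∧ H₁.Adj p.2 q.2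
    | Sum.inr (Sum.inr p), Sum.inr (Sum.inr q) => p.1 = q.1 ∧ H₂.Adj p.2 q.2
    | _, _ => False)

/-! ### Distances and degrees in a general graph -/

section Distance

variable {U : Type*} {X : SimpleGraph U} {u v : U}

lemma dist_eq_two_iff_exists : X.dist u v = 2 ↔
    u ≠ v ∧ ¬ X.Adj u v ∧ ∃ w, X.Adj u w ∧ X.Adj w v := by
  have h : X.dist u v = 2 ↔ X.edist u v = 2 := by
    rw [SimpleGraph.dist, ENat.toNat_eq_iff (by norm_num)]
    rfl
  rw [h, edist_eq_two_iff]
  simp [Set.Nonempty, mem_commonNeighbors, X.adj_comm v]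

/-- The `∨ =` alternatives let the same path witness also serve distances below three. -/
lemma exists_walk_length_le_three
    (h : ∃ x y, (X.Adj u x ∨ u = x) ∧ (X.Adj x y ∨ x = y) ∧ (X.Adj y v ∨ y = v)) :
    ∃ p : X.Walk u v, p.length ≤ 3 := by
  have step : ∀ {a b : U}, (X.Adj a b ∨ a = b) → ∃ p : X.Walk a b, p.length ≤ 1 := by
    rintro a b (h | rfl)
    · exact ⟨h.toWalk, by simp⟩
    · exact ⟨.nil, by simp⟩
  obtain ⟨x, y, h₁, h₂, h₃⟩ := h
  obtain ⟨p, hp⟩ := step h₁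
  obtain ⟨q, hq⟩ := step h₂
  obtain ⟨r, hr⟩ := step h₃
  exact ⟨p.append (q.append r), by simp only [Walk.length_append]; omega⟩

lemma three_le_dist (hr : X.Reachable u v) (hne : u ≠ v) (hadj : ¬ X.Adj u v)
    (hcom : ∀ w, X.Adj u w → ¬ X.Adj w v) : 3 ≤ X.dist u v := by
  have h₁ := hr.one_lt_dist_of_ne_of_not_adj hne hadj
  have h₂ : X.dist u v ≠ 2 := fun h => by
    obtain ⟨-, -, w, hw, hw'⟩ := dist_eq_two_iff_exists.1 h
    exact hcom w hw hw'
  omega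

/-- The handshake formula. -/
lemma sum_deg1 [Fintype U] (X : SimpleGraph U) : ∑ x, deg1 X x = 2 * numEdges X := by
  have h := X.sum_degrees_eq_twice_card_edges
  have h' : ∀ x, deg1 X x = X.degree x := fun x => by
    rw [deg1, ← card_neighborFinset_eq_degree, neighborFinset_eq_filter]
  simp_rw [h', h, numEdges, ← coe_edgeFinset, Set.ncard_coe_finset]
  congr!

/-- A vertex is distinct from and not adjacent to all but `deg1 X x + 1` vertices. -/
lemma card_ne_not_adj [Fintype U] (X : SimpleGraph U) (x : U) :
    (∑ y, if x ≠ y ∧ ¬ X.Adj x y then 1 else 0) + 1 + deg1 X x = Fintype.card U := by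
  have h : ∀ y, (if x ≠ y ∧ ¬ X.Adj x y then 1 else 0) + (if x = y then 1 else 0)
      + (if X.Adj x y then 1 else 0) = 1 := fun y => by
    by_cases hxy : x = y
    · subst hxy; simp
    · by_cases ha : X.Adj x y <;> simp [hxy, ha]
  have := Finset.sum_congr (rfl : (univ : Finset U) = univ) fun y _ => h y
  simp only [Finset.sum_add_distrib] at this
  rw [deg1, card_filter]
  simpa using this

end Distance

/-! ### Stars -/

/-- If `c` lies on every edge of a connected graph on `n` vertices, the graph is a star. -/
lemma nonempty_iso_star {V : Type*} [Fintype V] {G : SimpleGraph V} (hG : G.Connected)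
    (c : V) (hc : ∀ e ∈ G.edgeSet, c ∈ e) :
    Nonempty (G ≃g completeBipartiteGraph (Fin 1) (Fin (Fintype.card V - 1))) := by
  have hadj : ∀ a b, G.Adj a b ↔ (a = c ∧ b ≠ c ∨ a ≠ c ∧ b = c) := by
    have h₁ : ∀ a b, G.Adj a b → a = c ∨ b = c := fun a b h => by
      have := hc s(a, b) h
      rw [Sym2.mem_iff] at this
      tauto
    have h₂ : ∀ a, a ≠ c → G.Adj a c := fun a ha => by
      have : Nontrivial V := ⟨a, c, ha⟩
      obtain ⟨b, hb⟩ := hG.preconnected.exists_adj_of_nontrivial a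
      rcases h₁ a b hb with h | h
      · exact absurd h ha
      · exact h ▸ hb
    intro a b
    constructor
    · intro h
      have := h.ne
      rcases h₁ a b h with rfl | rfl
      · exact Or.inl ⟨rfl, this.symm⟩
      · exact Or.inr ⟨this, rfl⟩
    · rintro (⟨rfl, h⟩ | ⟨h, rfl⟩)
      · exact (h₂ b h).symm
      · exact h₂ a h
  have e₁ : {a // a = c} ≃ Fin 1 := Fintype.equivFinOfCardEq (by simp)
  have e₂ : {a // ¬ a = c} ≃ Fin (Fintype.card V - 1) :=
    Fintype.equivFinOfCardEq (by simp [Fintype.card_subtype_compl])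
  refine ⟨⟨(Equiv.sumCompl (· = c)).symm.trans (Equiv.sumCongr e₁ e₂), ?_⟩⟩
  intro a b
  rw [hadj]
  by_cases ha : a = c <;> by_cases hb : b = c <;>
    simp [completeBipartiteGraph, ha, hb, Equiv.sumCompl, Equiv.sumCongr]


/-! ### Adjacency in the join -/

section Adjacency

variable {V W₁ W₂ : Type*} (G : SimpleGraph V) (H₁ : SimpleGraph W₁) (H₂ : SimpleGraph W₂)
  (v v' : V) (e e' : G.edgeSet) (x x' : W₁) (y y' : W₂)

@[simp] lemma adj_VV : ¬ (sveJoin G H₁ H₂).Adj (.inl (.inl v)) (.inl (.inl v')) := by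
  simp [sveJoin, subdivG]

@[simp] lemma adj_VE : (sveJoin G H₁ H₂).Adj (.inl (.inl v)) (.inl (.inr e)) ↔
    v ∈ (e : Sym2 V) := by
  simp [sveJoin, subdivG]

@[simp] lemma adj_EV : (sveJoin G H₁ H₂).Adj (.inl (.inr e)) (.inl (.inl v)) ↔
    v ∈ (e : Sym2 V) := by
  simp [sveJoin, subdivG]

@[simp] lemma adj_EE : ¬ (sveJoin G H₁ H₂).Adj (.inl (.inr e)) (.inl (.inr e')) := by
  simp [sveJoin, subdivG]

@[simp] lemma adj_V1 : (sveJoin G H₁ H₂).Adj (.inl (.inl v)) (.inr (.inl x)) := by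
  simp [sveJoin]

@[simp] lemma adj_1V : (sveJoin G H₁ H₂).Adj (.inr (.inl x)) (.inl (.inl v)) := by
  simp [sveJoin]

@[simp] lemma adj_V2 : ¬ (sveJoin G H₁ H₂).Adj (.inl (.inl v)) (.inr (.inr y)) := by
  simp [sveJoin]

@[simp] lemma adj_2V : ¬ (sveJoin G H₁ H₂).Adj (.inr (.inr y)) (.inl (.inl v)) := by
  simp [sveJoin]

@[simp] lemma adj_E1 : ¬ (sveJoin G H₁ H₂).Adj (.inl (.inr e)) (.inr (.inl x)) := by
  simp [sveJoin]

@[simp] lemma adj_1E : ¬ (sveJoin G H₁ H₂).Adj (.inr (.inl x)) (.inl (.inr e)) := by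
  simp [sveJoin]

@[simp] lemma adj_E2 : (sveJoin G H₁ H₂).Adj (.inl (.inr e)) (.inr (.inr y)) := by
  simp [sveJoin]

@[simp] lemma adj_2E : (sveJoin G H₁ H₂).Adj (.inr (.inr y)) (.inl (.inr e)) := by
  simp [sveJoin]

@[simp] lemma adj_11 : (sveJoin G H₁ H₂).Adj (.inr (.inl x)) (.inr (.inl x')) ↔
    H₁.Adj x x' := by
  simpa [sveJoin, H₁.adj_comm x'] using Adj.ne

@[simp] lemma adj_22 : (sveJoin G H₁ H₂).Adj (.inr (.inr y)) (.inr (.inr y')) ↔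
    H₂.Adj y y' := by
  simpa [sveJoin, H₂.adj_comm y'] using Adj.ne

@[simp] lemma adj_12 : ¬ (sveJoin G H₁ H₂).Adj (.inr (.inl x)) (.inr (.inr y)) := by
  simp [sveJoin]

@[simp] lemma adj_21 : ¬ (sveJoin G H₁ H₂).Adj (.inr (.inr y)) (.inr (.inl x)) := by
  simp [sveJoin]

end Adjacency

/-! ### Second degrees in the join -/

lemma exists_mem_coe_edge {V : Type*} (G : SimpleGraph V) (e : G.edgeSet) : ∃ v, v ∈ (e : Sym2 V) := by
  obtain ⟨e, he⟩ := e
  induction e with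
  | _ a b => exact ⟨a, by simp⟩

lemma exists_edge_mem {V : Type*} (G : SimpleGraph V) [Nontrivial V] (hG : G.Connected) (v : V) :
    ∃ e : G.edgeSet, v ∈ (e : Sym2 V) := by
  obtain ⟨b, hb⟩ := hG.preconnected.exists_adj_of_nontrivial v
  exact ⟨⟨s(v, b), hb⟩, by simp⟩

section Degrees

variable {V W₁ W₂ : Type*} [Fintype V] [Fintype W₁] [Fintype W₂]
  (G : SimpleGraph V) (H₁ : SimpleGraph W₁) (H₂ : SimpleGraph W₂)

lemma sum_ne_add_one {U : Type*} [Fintype U] (x : U) :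
    (∑ y, if x ≠ y then 1 else 0) + 1 = Fintype.card U := by
  simpa [deg1] using card_ne_not_adj (⊥ : SimpleGraph U) x

lemma deg2_V [Nontrivial V] [Nonempty W₁] (hG : G.Connected) (v : V) :
    deg2 (sveJoin G H₁ H₂) (.inl (.inl v)) + 1 = Fintype.card V + Fintype.card W₂ := by
  have := exists_edge_mem G hG v
  rw [← sum_ne_add_one v, deg2, card_filter]
  simp only [Fintype.sum_sum_type, dist_eq_two_iff_exists]
  simp_all [-Subtype.exists, -Subtype.forall]
  omega

lemma deg2_E [Nonempty W₂] (e : G.edgeSet) :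
    deg2 (sveJoin G H₁ H₂) (.inl (.inr e)) + 1 = Fintype.card G.edgeSet + Fintype.card W₁ := by
  have := exists_mem_coe_edge G e
  rw [← sum_ne_add_one e, deg2, card_filter]
  simp only [Fintype.sum_sum_type, dist_eq_two_iff_exists]
  simp_all [-Subtype.exists, -Subtype.forall]
  rw [add_right_comm]
  -- The two sums differ only in their decidability instances.
  congr!

lemma deg2_1 [Nonempty V] (x : W₁) :
    deg2 (sveJoin G H₁ H₂) (.inr (.inl x)) + 1 + deg1 H₁ x =
      Fintype.card G.edgeSet + Fintype.card W₁ := by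
  have := exists_mem_coe_edge G
  rw [← card_ne_not_adj H₁ x, deg2, card_filter]
  simp only [Fintype.sum_sum_type, dist_eq_two_iff_exists]
  simp_all [-Subtype.exists, -Subtype.forall]
  omega

lemma deg2_2 [Nontrivial V] (hG : G.Connected) (y : W₂) :
    deg2 (sveJoin G H₁ H₂) (.inr (.inr y)) + 1 + deg1 H₂ y =
      Fintype.card V + Fintype.card W₂ := by
  have := exists_edge_mem G hG
  have : Nonempty G.edgeSet := (this (Classical.arbitrary V)).nonempty
  rw [← card_ne_not_adj H₂ y, deg2, card_filter]
  simp only [Fintype.sum_sum_type, dist_eq_two_iff_exists]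
  simp_all [-Subtype.exists, -Subtype.forall]
  omega

end Degrees

/-! ### Eccentricities in the join -/

section Eccentricity

variable {V W₁ W₂ : Type*} (G : SimpleGraph V) (H₁ : SimpleGraph W₁) (H₂ : SimpleGraph W₂)

/-- The join has diameter at most 3: each case below names the inner vertices of a walk. -/
lemma exists_short_walk [Nontrivial V] [Nonempty W₁] [Nonempty W₂] (hG : G.Connected)
    (a b : (V ⊕ G.edgeSet) ⊕ (W₁ ⊕ W₂)) :
    ∃ p : (sveJoin G H₁ H₂).Walk a b, p.length ≤ 3 := by
  apply exists_walk_length_le_three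
  obtain ⟨x₀⟩ := ‹Nonempty W₁›
  obtain ⟨y₀⟩ := ‹Nonempty W₂›
  have v₀ := Classical.arbitrary V
  choose ε hε using exists_edge_mem G hG
  choose ν hν using exists_mem_coe_edge G
  rcases a with (v | e) | (x | y) <;> rcases b with (v' | e') | (x' | y')
  · exact ⟨.inr (.inl x₀), .inl (.inl v'), by simp⟩
  · exact ⟨.inr (.inl x₀), .inl (.inl (ν e')), by simp [hν]⟩
  · exact ⟨.inr (.inl x'), .inr (.inl x'), by simp⟩
  · exact ⟨.inl (.inr (ε v)), .inr (.inr y'), by simp [hε]⟩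
  · exact ⟨.inl (.inl (ν e)), .inr (.inl x₀), by simp [hν]⟩
  · exact ⟨.inr (.inr y₀), .inl (.inr e'), by simp⟩
  · exact ⟨.inl (.inl (ν e)), .inr (.inl x'), by simp [hν]⟩
  · exact ⟨.inr (.inr y'), .inr (.inr y'), by simp⟩
  · exact ⟨.inl (.inl v'), .inl (.inl v'), by simp⟩
  · exact ⟨.inl (.inl (ν e')), .inl (.inr e'), by simp [hν]⟩
  · exact ⟨.inl (.inl v₀), .inr (.inl x'), by simp⟩
  · exact ⟨.inl (.inl v₀), .inl (.inr (ε v₀)), by simp [hε]⟩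
  · exact ⟨.inl (.inr (ε v')), .inl (.inl v'), by simp [hε]⟩
  · exact ⟨.inl (.inr e'), .inl (.inr e'), by simp⟩
  · exact ⟨.inl (.inr (ε v₀)), .inl (.inl v₀), by simp [hε]⟩
  · exact ⟨.inl (.inr (ε v₀)), .inr (.inr y'), by simp⟩

/-- The hypothesis `hcov` says that no vertex lies on all edges of `G`. -/
lemma ecc_eq_three [Fintype V] [Fintype W₁] [Fintype W₂] [Nonempty W₁] [Nonempty W₂]
    (hG : G.Connected) (hV : 3 ≤ Fintype.card V)
    (hcov : ∀ v, ∃ e : G.edgeSet, v ∉ (e : Sym2 V))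
    (a : (V ⊕ G.edgeSet) ⊕ (W₁ ⊕ W₂)) : ecc (sveJoin G H₁ H₂) a = 3 := by
  have : Nontrivial V := Fintype.one_lt_card_iff_nontrivial.1 (by omega)
  have hw := exists_short_walk G H₁ H₂ hG
  apply le_antisymm
  · refine Finset.sup_le fun b _ => ?_
    obtain ⟨p, hp⟩ := hw a b
    exact (dist_le p).trans hp
  · suffices h : ∃ b, 3 ≤ (sveJoin G H₁ H₂).dist a b by
      obtain ⟨b, hb⟩ := h
      exact hb.trans (Finset.le_sup (f := fun u => (sveJoin G H₁ H₂).dist a u) (mem_univ b))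
    have key : ∀ b, a ≠ b → ¬ (sveJoin G H₁ H₂).Adj a b →
        (∀ w, (sveJoin G H₁ H₂).Adj a w → ¬ (sveJoin G H₁ H₂).Adj w b) →
        ∃ b, 3 ≤ (sveJoin G H₁ H₂).dist a b := fun b h₁ h₂ h₃ =>
      ⟨b, three_le_dist (hw a b).choose.reachable h₁ h₂ h₃⟩
    rcases a with (v | e) | (x | y)
    · obtain ⟨e, he⟩ := hcov v
      refine key (.inl (.inr e)) (by simp) (by simpa) ?_
      rintro ((w | w) | (w | w)) <;> simp
    · -- An edge has two endpoints, so a third vertex of `G` avoids it.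
      obtain ⟨v, hv⟩ : ∃ v, v ∉ (e : Sym2 V) := by
        obtain ⟨e, he⟩ := e
        induction e with
        | _ p q =>
          obtain ⟨v, hv⟩ := Finset.exists_mem_notMem_of_card_lt_card
            (s := {p, q}) (t := (univ : Finset V))
            (Finset.card_le_two.trans_lt (by rw [card_univ]; omega))
          exact ⟨v, by simpa using hv⟩
      refine key (.inl (.inl v)) (by simp) (by simpa) ?_
      rintro ((w | w) | (w | w)) <;> simp
    · obtain ⟨y⟩ := ‹Nonempty W₂›
      refine key (.inr (.inr y)) (by simp) (by simp) ?_
      rintro ((w | w) | (w | w)) <;> simp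
    · obtain ⟨x⟩ := ‹Nonempty W₁›
      refine key (.inr (.inl x)) (by simp) (by simp) ?_
      rintro ((w | w) | (w | w)) <;> simp

end Eccentricity

theorem sveJoin_leapECI_nonstar {V W₁ W₂ : Type*} [Fintype V] [Fintype W₁] [Fintype W₂]
    (G : SimpleGraph V) (H₁ : SimpleGraph W₁) (H₂ : SimpleGraph W₂)
    (hGconn : G.Connected) (hH₁conn : H₁.Connected) (hH₂conn : H₂.Connected)
    (n m n₁ n₂ m₁ m₂ : ℕ) (hn : n = Fintype.card V) (hm : m = numEdges G)
    (hn₁ : n₁ = Fintype.card W₁) (hm₁ : m₁ = numEdges H₁)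
    (hn₂ : n₂ = Fintype.card W₂) (hm₂ : m₂ = numEdges H₂) (hn3 : 3 ≤ n)
    (hstar : ¬ Nonempty (G ≃g completeBipartiteGraph (Fin 1) (Fin (n - 1)))) :
    (leapECI (sveJoin G H₁ H₂) : ℤ) =
      3 * ((n : ℤ) + (n₂ : ℤ) - 1) * ((n : ℤ) + (n₂ : ℤ)) +
        3 * ((m : ℤ) + (n₁ : ℤ) - 1) * ((m : ℤ) + (n₁ : ℤ)) -
        6 * ((m₁ : ℤ) + (m₂ : ℤ)) := by
  subst hn hm hn₁ hm₁ hn₂ hm₂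
  have hV : Nontrivial V := Fintype.one_lt_card_iff_nontrivial.1 (by omega)
  have hW₁ := hH₁conn.nonempty
  have hW₂ := hH₂conn.nonempty
  have hcov : ∀ v, ∃ e : G.edgeSet, v ∉ (e : Sym2 V) := by
    intro v
    by_contra! h
    exact hstar (nonempty_iso_star hGconn v fun e he => h ⟨e, he⟩)
  have hm : numEdges G = Fintype.card G.edgeSet := by
    rw [numEdges, ← Nat.card_coe_set_eq, Nat.card_eq_fintype_card]
  have hs₁ : (∑ x, (deg1 H₁ x : ℤ)) = 2 * numEdges H₁ := by exact_mod_cast sum_deg1 H₁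
  have hs₂ : (∑ y, (deg1 H₂ y : ℤ)) = 2 * numEdges H₂ := by exact_mod_cast sum_deg1 H₂
  have dV : ∀ v, (deg2 (sveJoin G H₁ H₂) (.inl (.inl v)) : ℤ) =
      Fintype.card V + Fintype.card W₂ - 1 := fun v => by
    have := deg2_V G H₁ H₂ hGconn v
    omega
  have dE : ∀ e, (deg2 (sveJoin G H₁ H₂) (.inl (.inr e)) : ℤ) =
      Fintype.card G.edgeSet + Fintype.card W₁ - 1 := fun e => by
    have := deg2_E G H₁ H₂ e
    omega
  have d1 : ∀ x, (deg2 (sveJoin G H₁ H₂) (.inr (.inl x)) : ℤ) =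
      Fintype.card G.edgeSet + Fintype.card W₁ - 1 - deg1 H₁ x := fun x => by
    have := deg2_1 G H₁ H₂ x
    omega
  have d2 : ∀ y, (deg2 (sveJoin G H₁ H₂) (.inr (.inr y)) : ℤ) =
      Fintype.card V + Fintype.card W₂ - 1 - deg1 H₂ y := fun y => by
    have := deg2_2 G H₁ H₂ hGconn y
    omega
  simp only [leapECI, ecc_eq_three G H₁ H₂ hGconn hn3 hcov, ← Finset.sum_mul,
    Fintype.sum_sum_type, Nat.cast_mul, Nat.cast_add, Nat.cast_sum, dV, dE, d1, d2,
    Finset.sum_sub_distrib, hs₁, hs₂, hm, Finset.sum_const, card_univ, nsmul_eq_mul]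
  push_cast
  ring
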